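/- Let ρ̄ be a probability density on 𝕋^d and φ a bounded measurable function on 𝕋^{3d} satisfying the two cancellations ∫ φ(x,z,z') ρ̄(x) dx = 0 for all z,z' and ∫∫ φ(x,z,z') ρ̄(z) ρ̄(z') dz dz' = 0 for all x. If 4 ≤ 4m ≤ N, then (1/(2m)!) ∫_{𝕋^{dN}} ρ̄_N (N^{−2} ∑_{i,j,k=1}^N φ(x_i,x_j,x_k))^{2m} dX ≤ 2 m^2 ( √(32 e^3) · sup_{p≥1} M_p/p )^{2m}, where M_p = ‖ sup_{z,z'}|φ(·,z,z')| ‖_{L^p(ρ̄ dx)}. -/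

import Mathlib

open MeasureTheory

/-- The `d`-dimensional torus `𝕋^d = [0,1]^d`. -/
abbrev Torus (d : ℕ) := Fin d → AddCircle (1 : ℝ)

/-- `M_p = ‖ sup_{z,z'} |φ(·,z,z')| ‖_{L^p(ρ̄ dx)}`. -/
noncomputable def Mp {d : ℕ} (ρ : Torus d → ℝ) (φ : Torus d → Torus d → Torus d → ℝ)
    (p : ℝ) : ℝ :=
  (∫ x : Torus d, (⨆ z, ⨆ z', |φ x z z'|) ^ p * ρ x) ^ (1 / p)

/-- `sup_{p ≥ 1} M_p / p`. -/
noncomputable def Msup {d : ℕ} (ρ : Torus d → ℝ)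
    (φ : Torus d → Torus d → Torus d → ℝ) : ℝ :=
  ⨆ p : {p : ℝ // 1 ≤ p}, Mp ρ φ (p : ℝ) / (p : ℝ)

/-!
Expanding the power `n = 2m` turns the left-hand side into a sum, over triples of words `I`, `J`,
`K` of length `n` in the `N` indices, of the expectations of `∏ l, φ (x_{I l}, x_{J l}, x_{K l})`.
The cancellations kill such an expectation as soon as, for some `l`, the letter `I l`, or both `J l`
and `K l`, occur nowhere else. Any other term is at most `S ^ n * ∏ a, α_a ^ α_a`, where `α_a`
counts the occurrences of `a` in `I` and `S = sup_{p ≥ 1} M_p / p`, since `M_p ^ p ≤ (S p) ^ p`.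

To count the surviving pairs `(J, K)`, exchange `J l` and `K l` at suitable positions: this produces
words `B` and `F` such that `F` contains every letter occurring exactly once in `I` and `B`
together. If there are `s` such letters, at most a fraction `(n / N) ^ s` of all words `F` contains
them. The remaining sum over `I` and `B` depends only on the letter counts; a Chernoff bound
decouples the letters, each of which contributes at most `exp (n / N)`, and Stirling's formula
yields the constant.
-/

section Words

open Finset Function
open scoped Nat

variable {ι κ : Type*}

lemma restore_extend {α : Type*} {e : α → κ} (he : Injective e) (w : α → ι) {v : α → ι}
    {f : κ → ι} (hf : f ∘ e = v) : extend e v (extend e w f) = f := by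
  subst hf
  ext l
  obtain ⟨a, rfl⟩ | hl := em (∃ a, e a = l)
  · exact he.extend_apply _ _ a
  · rw [extend_apply' _ _ _ hl, extend_apply' _ _ _ hl]

variable [Fintype κ] [DecidableEq ι]

/-- The number of occurrences of the letter `a` in the word `f`. -/
def occ (f : κ → ι) (a : ι) : ℕ := #{l | f l = a}

lemma card_fiber_eq_occ (f : κ → ι) (a : ι) : Fintype.card {l // f l = a} = occ f a :=
  Fintype.card_subtype _

lemma occ_apply_pos (f : κ → ι) (l : κ) : 0 < occ f (f l) :=
  card_pos.2 ⟨l, by simp⟩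

lemma occ_pos_iff {f : κ → ι} {a : ι} : 0 < occ f a ↔ ∃ l, f l = a := by
  simp [occ, card_pos, filter_nonempty_iff]

lemma ne_apply_of_occ_eq_zero {f : κ → ι} {a : ι} (h : occ f a = 0) (l : κ) : f l ≠ a := by
  rintro rfl
  exact (occ_apply_pos f l).ne' h

lemma apply_ne_apply_of_occ_eq_one {f : κ → ι} {l l' : κ} (h : occ f (f l) = 1) (hne : l' ≠ l) :
    f l' ≠ f l := fun he =>
  hne (card_le_one.1 h.le l' (by simpa using he) l (by simp))

variable [Fintype ι]

lemma sum_occ (f : κ → ι) : ∑ a, occ f a = Fintype.card κ :=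
  (card_eq_sum_card_fiberwise fun _ _ => mem_univ _).symm

lemma prod_comp_eq_prod_pow_occ {M : Type*} [CommMonoid M] (f : κ → ι) (h : ι → M) :
    ∏ l, h (f l) = ∏ a, h a ^ occ f a := by
  simpa [occ] using (prod_fiberwise' univ f h).symm

variable [DecidableEq κ]

omit [Fintype ι] [DecidableEq κ] in
lemma exists_perm_comp_eq {f g : κ → ι} (h : occ g = occ f) : ∃ τ : Equiv.Perm κ, f ∘ τ = g := by
  have fiber_equiv (a : ι) : Nonempty ({l // g l = a} ≃ {l // f l = a}) :=
    ⟨Fintype.equivOfCardEq (by simp only [card_fiber_eq_occ, h])⟩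
  exact ⟨Equiv.ofFiberEquiv fun a => (fiber_equiv a).some, funext (Equiv.ofFiberEquiv_map _)⟩

/-- Permutations of the positions act transitively on the words with given numbers of
occurrences, with stabilizer of order `∏ a, (occ f a)!`. -/
lemma card_occ_eq_mul_prod_factorial (f : κ → ι) :
    #{g : κ → ι | occ g = occ f} * ∏ a, (occ f a)! = (Fintype.card κ)! := by
  have occ_comp (σ : Equiv.Perm κ) : occ (f ∘ σ) = occ f := by
    funext a
    simp only [← card_fiber_eq_occ]
    exact Fintype.card_congr (σ.subtypeEquiv fun _ => Iff.rfl)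
  have card_fiber (g : κ → ι) (hg : occ g = occ f) :
      #{σ : Equiv.Perm κ | f ∘ σ = g} = ∏ a, (occ f a)! := by
    obtain ⟨τ, rfl⟩ := exists_perm_comp_eq hg
    simp only [← card_fiber_eq_occ]
    rw [← DomMulAct.stabilizer_card, ← Fintype.card_subtype]
    refine Fintype.card_congr ((Equiv.mulRight τ⁻¹).subtypeEquiv fun σ => ?_)
    simp only [funext_iff, comp_apply, Equiv.coe_mulRight, Equiv.Perm.mul_apply]
    exact ⟨fun h l => by simpa using h (τ⁻¹ l), fun h l => by simpa using h (τ l)⟩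
  calc #{g : κ → ι | occ g = occ f} * ∏ a, (occ f a)!
      = ∑ g : κ → ι with occ g = occ f, #{σ : Equiv.Perm κ | f ∘ σ = g} := by
        rw [sum_congr rfl fun g hg => card_fiber g (mem_filter.1 hg).2, sum_const, smul_eq_mul]
    _ = #(univ : Finset (Equiv.Perm κ)) :=
        (card_eq_sum_card_fiberwise fun σ _ => by simp [occ_comp]).symm
    _ = (Fintype.card κ)! := by rw [card_univ, Fintype.card_perm]

omit [DecidableEq κ] in
lemma occ_mem_piFinset (f : κ → ι) :
    occ f ∈ Fintype.piFinset fun _ => range (Fintype.card κ + 1) :=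
  Fintype.mem_piFinset.2 fun _ => mem_range_succ_iff.2 (card_le_univ _)

lemma sum_comp_occ_le {G : (ι → ℕ) → ℝ} (hG : ∀ α, 0 ≤ G α) {x : ℝ} (hx : 0 < x) :
    ∑ f : κ → ι, G (occ f) ≤ (Fintype.card κ)! * (x ^ Fintype.card κ)⁻¹ *
      ∑ α ∈ Fintype.piFinset fun _ => range (Fintype.card κ + 1),
        G α * ∏ a, (x ^ α a / (α a)!) := by
  rw [← sum_fiberwise_of_maps_to fun f _ => occ_mem_piFinset f, mul_sum]
  refine sum_le_sum fun α _ => ?_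
  rw [sum_congr rfl fun f hf => congrArg G (mem_filter.1 hf).2, sum_const, nsmul_eq_mul]
  obtain hα | ⟨f, hf⟩ := ({f : κ → ι | occ f = α} : Finset (κ → ι)).eq_empty_or_nonempty
  · have := hG α
    rw [hα, card_empty, Nat.cast_zero, zero_mul]
    positivity
  · obtain rfl : occ f = α := (mem_filter.1 hf).2
    have hcard : (#{g : κ → ι | occ g = occ f} : ℝ) * ∏ a, ((occ f a)! : ℝ) = (Fintype.card κ)! :=
      mod_cast card_occ_eq_mul_prod_factorial f
    have hfac : ∏ a, ((occ f a)! : ℝ) ≠ 0 := prod_ne_zero_iff.2 fun a _ => by positivity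
    rw [prod_div_distrib, prod_pow_eq_pow_sum, sum_occ, ← hcard]
    field_simp
    exact le_rfl

/-- A Chernoff bound: dropping the constraint that the letter counts add up to the length of the
words makes the letters independent. -/
lemma sum_prod_occ_le {g : ℕ → ℕ → ℝ} (hg : ∀ k l, 0 ≤ g k l) {x y : ℝ} (hx : 0 < x)
    (hy : 0 < y) :
    ∑ I : κ → ι, ∑ B : κ → ι, ∏ a, g (occ I a) (occ B a) ≤
      (Fintype.card κ)! ^ 2 * ((x * y) ^ Fintype.card κ)⁻¹ *
        (∑ k ∈ range (Fintype.card κ + 1), ∑ l ∈ range (Fintype.card κ + 1),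
          g k l * (x ^ k / k !) * (y ^ l / l !)) ^ Fintype.card ι := by
  set n := Fintype.card κ
  set R := Fintype.piFinset fun _ : ι => range (n + 1)
  calc ∑ I : κ → ι, ∑ B : κ → ι, ∏ a, g (occ I a) (occ B a)
      ≤ n ! * (x ^ n)⁻¹ *
          ∑ α ∈ R, (∑ B : κ → ι, ∏ a, g (α a) (occ B a)) * ∏ a, (x ^ α a / (α a)!) :=
        sum_comp_occ_le (G := fun α => ∑ B : κ → ι, ∏ a, g (α a) (occ B a))
          (fun _ => sum_nonneg fun _ _ => prod_nonneg fun _ _ => hg _ _) hx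
    _ ≤ n ! * (x ^ n)⁻¹ *
          ∑ α ∈ R, (n ! * (y ^ n)⁻¹ *
            ∑ β ∈ R, (∏ a, g (α a) (β a)) * ∏ a, (y ^ β a / (β a)!)) * ∏ a, (x ^ α a / (α a)!) := by
        gcongr with α _
        exact sum_comp_occ_le (G := fun β => ∏ a, g (α a) (β a))
          (fun _ => prod_nonneg fun _ _ => hg _ _) hy
    _ = n ! ^ 2 * ((x * y) ^ n)⁻¹ *
          ∑ α ∈ R, ∑ β ∈ R, ∏ a, (g (α a) (β a) * (x ^ α a / (α a)!) * (y ^ β a / (β a)!)) := by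
        simp only [mul_sum, sum_mul, prod_mul_distrib]
        refine sum_congr rfl fun α _ => sum_congr rfl fun β _ => ?_
        rw [mul_pow, mul_inv]
        ring
    _ = n ! ^ 2 * ((x * y) ^ n)⁻¹ * ∑ α ∈ R, ∏ a, ∑ l ∈ range (n + 1),
          g (α a) l * (x ^ α a / (α a)!) * (y ^ l / l !) := by
        congr 1
        exact sum_congr rfl fun α _ => sum_prod_piFinset (range (n + 1))
          fun a l => g (α a) l * (x ^ α a / (α a)!) * (y ^ l / l !)
    _ = _ := by
        rw [sum_prod_piFinset (range (n + 1))
          fun _ k => ∑ l ∈ range (n + 1), g k l * (x ^ k / k !) * (y ^ l / l !),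
          prod_const, card_univ]

/-- Choose in `F` one position of each letter of `Z` and overwrite these positions by arbitrary
letters: `F` is recovered from the result and the chosen positions. -/
lemma card_cover_mul_le (Z : Finset ι) :
    #{F : κ → ι | ∀ a ∈ Z, ∃ l, F l = a} * Fintype.card ι ^ #Z ≤
      Fintype.card ι ^ Fintype.card κ * Fintype.card κ ^ #Z := by
  have hsec (F : {F : κ → ι // ∀ a ∈ Z, ∃ l, F l = a}) :
      ∃ e : Z → κ, F.1 ∘ e = Subtype.val := by
    choose e he using fun a : Z => F.2 a a.2
    exact ⟨e, funext he⟩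
  choose e he using hsec
  have e_inj (F) : Injective (e F) := .of_comp (f := F.1) (he F ▸ Subtype.val_injective)
  let overwrite (p : {F : κ → ι // ∀ a ∈ Z, ∃ l, F l = a} × (Z → ι)) : (κ → ι) × (Z → κ) :=
    (extend (e p.1) p.2 p.1.1, e p.1)
  have overwrite_inj : Injective overwrite := by
    rintro ⟨F, w⟩ ⟨F', w'⟩ h
    obtain ⟨hext, he'⟩ : extend (e F) w F.1 = extend (e F') w' F'.1 ∧ e F = e F' :=
      Prod.ext_iff.1 h
    have hw : w = w' := by
      rw [← extend_comp (e_inj F) w F.1, hext, he', extend_comp (e_inj F')]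
    have hF : F.1 = F'.1 := by
      rw [← restore_extend (e_inj F) w (he F), hext, he', restore_extend (e_inj F') w' (he F')]
    rw [Subtype.ext hF, hw]
  simpa [Fintype.card_subtype] using Fintype.card_le_of_injective overwrite overwrite_inj

end Words

section Numerics

open Finset Real
open scoped Nat

lemma succ_pow_succ_le_exp_pow_mul_factorial (k : ℕ) :
    ((k + 1 : ℕ) : ℝ) ^ (k + 1) ≤ exp 1 ^ k * (k + 1)! := by
  induction k with
  | zero => simp
  | succ k ih =>
    calc ((k + 1 + 1 : ℕ) : ℝ) ^ (k + 1 + 1)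
        = (k + 2 : ℕ) * ((k + 1 : ℕ) ^ (k + 1) * (1 + ((k + 1 : ℕ) : ℝ)⁻¹) ^ (k + 1)) := by
          rw [← mul_pow, pow_succ']
          push_cast
          field_simp
          ring
      _ ≤ (k + 2 : ℕ) * ((exp 1 ^ k * (k + 1)!) * exp 1) := by
          gcongr
          exact one_add_inv_pow_le_exp
      _ = exp 1 ^ (k + 1) * (k + 1 + 1)! := by
          rw [Nat.factorial_succ (k + 1)]
          push_cast
          ring

lemma factorial_mul_exp_div_pow_le {n : ℕ} (hn : 2 ≤ n) :
    n ! * (exp 1 / n) ^ n ≤ exp 1 ^ 2 * n ^ 2 / 8 := by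
  have hn' : (2 : ℝ) ≤ n := mod_cast hn
  have stirling_le : Stirling.stirlingSeq n ≤ exp 1 ^ 2 / 4 := by
    obtain ⟨k, rfl⟩ := Nat.exists_eq_add_of_le' hn
    calc Stirling.stirlingSeq (k + 2) ≤ Stirling.stirlingSeq 2 :=
          Stirling.stirlingSeq'_antitone (Nat.le_add_left 1 k)
      _ = exp 1 ^ 2 / 4 := by
          rw [Stirling.stirlingSeq, show √(2 * (2 : ℕ) : ℝ) = 2 by
            rw [show (2 * (2 : ℕ) : ℝ) = 2 ^ 2 by norm_num]; exact sqrt_sq zero_le_two]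
          norm_num [div_pow]
          field_simp
  have sqrt_le : √(2 * n) ≤ n ^ 2 / 2 := by
    refine sqrt_le_iff.2 ⟨by positivity, ?_⟩
    nlinarith [pow_le_pow_left₀ zero_le_two hn' 3]
  calc n ! * (exp 1 / n) ^ n = Stirling.stirlingSeq n * √(2 * n) := by
        have : exp 1 / n = (n / exp 1)⁻¹ := (inv_div _ _).symm
        rw [Stirling.stirlingSeq, this, inv_pow]
        field_simp
    _ ≤ exp 1 ^ 2 / 4 * (n ^ 2 / 2) := by gcongr
    _ = exp 1 ^ 2 * n ^ 2 / 8 := by ring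

lemma pow_mul_factorial_mul_exp_div_pow_le {n : ℕ} (hn : 2 ≤ n) :
    18 ^ n * (n ! * (exp 1 / n) ^ n) ≤ n ^ 2 / 2 * √(32 * exp 1 ^ 3) ^ n := by
  have e_lower : 2.7 ≤ exp 1 := by linarith [exp_one_gt_d9]
  have sq_lower : 81 * exp 1 ^ 2 ≤ √(32 * exp 1 ^ 3) ^ 2 := by
    rw [sq_sqrt (by positivity)]
    nlinarith [mul_le_mul_of_nonneg_left e_lower (sq_nonneg (exp 1))]
  have lower : 18 ≤ √(32 * exp 1 ^ 3) := by
    refine le_of_sq_le_sq ?_ (by positivity)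
    nlinarith
  obtain ⟨j, rfl⟩ := Nat.exists_eq_add_of_le' hn
  set q : ℝ := ((j + 2 : ℕ) : ℝ)
  calc 18 ^ (j + 2) * ((j + 2)! * (exp 1 / q) ^ (j + 2))
      ≤ 18 ^ (j + 2) * (exp 1 ^ 2 * q ^ 2 / 8) := by
        gcongr
        exact factorial_mul_exp_div_pow_le hn
    _ = q ^ 2 / 2 * (18 ^ j * (81 * exp 1 ^ 2)) := by ring
    _ ≤ q ^ 2 / 2 * (√(32 * exp 1 ^ 3) ^ j * √(32 * exp 1 ^ 3) ^ 2) := by gcongr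
    _ = q ^ 2 / 2 * √(32 * exp 1 ^ 3) ^ (j + 2) := by rw [pow_add]

lemma sum_pow_self_mul_pow_div_factorial_le {x : ℝ} (hx : 0 ≤ x) (hex : exp 1 * x < 1) (n : ℕ) :
    ∑ k ∈ range (n + 1), (k : ℝ) ^ k * (x ^ k / k !) ≤ 1 + x / (1 - exp 1 * x) := by
  rw [sum_range_succ', add_comm]
  simp only [pow_zero, Nat.factorial_zero, Nat.cast_one, div_one, mul_one]
  gcongr
  calc ∑ k ∈ range n, ((k + 1 : ℕ) : ℝ) ^ (k + 1) * (x ^ (k + 1) / (k + 1)!)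
      ≤ ∑ k ∈ range n, x * (exp 1 * x) ^ k := by
        refine sum_le_sum fun k _ => ?_
        calc ((k + 1 : ℕ) : ℝ) ^ (k + 1) * (x ^ (k + 1) / (k + 1)!)
            ≤ exp 1 ^ k * (k + 1)! * (x ^ (k + 1) / (k + 1)!) := by
              gcongr
              exact succ_pow_succ_le_exp_pow_mul_factorial k
          _ = x * (exp 1 * x) ^ k := by field_simp; ring
    _ ≤ x / (1 - exp 1 * x) := by
        rw [← mul_sum, div_eq_mul_inv, ← tsum_geometric_of_lt_one (by positivity) hex]
        gcongr
        exact (summable_geometric_of_lt_one (by positivity) hex).sum_le_tsum _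
          fun _ _ => by positivity

/-- The weight `k ^ k` of a letter occurring `k` times in `I` and `l` times in `B`, damped by the
factor `u` if it occurs exactly once in the two words together. -/
noncomputable def siteWeight (u : ℝ) (k l : ℕ) : ℝ :=
  k ^ k * if k + l = 1 then u else 1

lemma siteWeight_nonneg {u : ℝ} (hu : 0 ≤ u) (k l : ℕ) : 0 ≤ siteWeight u k l := by
  unfold siteWeight
  positivity

lemma sum_siteWeight_le (u : ℝ) {x y : ℝ} (hx : 0 ≤ x) (hy : 0 ≤ y) (hex : exp 1 * x < 1) {n : ℕ}
    (hn : 1 ≤ n) :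
    ∑ k ∈ range (n + 1), ∑ l ∈ range (n + 1),
        siteWeight u k l * (x ^ k / k !) * (y ^ l / l !) ≤
      (1 + x / (1 - exp 1 * x)) * exp y - (1 - u) * (x + y) := by
  set R := range (n + 1)
  set f : ℕ → ℝ := fun k => (k : ℝ) ^ k * (x ^ k / k !)
  set g : ℕ → ℝ := fun l => y ^ l / (l !)
  have antidiagonal_one : {p ∈ R ×ˢ R | p.1 + p.2 = 1} = antidiagonal 1 := by
    ext p
    simp only [R, mem_filter, mem_product, mem_range,
      HasAntidiagonal.mem_antidiagonal]
    omega
  have sum_f : ∑ k ∈ R, f k ≤ 1 + x / (1 - exp 1 * x) :=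
    sum_pow_self_mul_pow_div_factorial_le hx hex n
  calc ∑ k ∈ R, ∑ l ∈ R, siteWeight u k l * (x ^ k / k !) * (y ^ l / l !)
      = ∑ p ∈ R ×ˢ R, (f p.1 * g p.2 - (1 - u) * if p.1 + p.2 = 1 then f p.1 * g p.2 else 0) := by
        rw [sum_product]
        refine sum_congr rfl fun k _ => sum_congr rfl fun l _ => ?_
        simp only [siteWeight, f, g]
        split_ifs <;> ring
    _ = (∑ k ∈ R, f k) * ∑ l ∈ R, g l - (1 - u) * (x + y) := by
        rw [sum_sub_distrib, ← mul_sum, ← sum_filter, antidiagonal_one, sum_mul_sum, sum_product,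
          Nat.sum_antidiagonal_eq_sum_range_succ_mk]
        simp [f, g, sum_range_succ, add_comm]
    _ ≤ (1 + x / (1 - exp 1 * x)) * exp y - (1 - u) * (x + y) := by
        gcongr
        exact sum_le_exp_of_nonneg hy _

lemma one_add_div_mul_exp_sub_le_exp_sq {s : ℝ} (hs : 0 ≤ s) (hs2 : s ^ 2 ≤ 1 / 2) :
    (1 + s / 6 / (1 - exp 1 * (s / 6))) * exp (2 / 3 * s) - (1 - s ^ 2) * (s / 6 + 2 / 3 * s) ≤
      exp (s ^ 2) := by
  have s_le : s ≤ 0.71 := by nlinarith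
  have exp_mul_le : exp 1 * (s / 6) ≤ 0.3217 := by nlinarith [exp_one_lt_d9]
  have fraction_le : s / 6 / (1 - exp 1 * (s / 6)) ≤ s / 6 + 21 / 5 * (s / 6) ^ 2 := by
    rw [div_le_iff₀ (by linarith)]
    have : exp 1 ≤ 21 / 5 * (1 - exp 1 * (s / 6)) := by linarith [exp_one_lt_d9]
    nlinarith [sq_nonneg (s / 6)]
  have exp_le : exp (2 / 3 * s) ≤
      1 + 2 / 3 * s + (2 / 3 * s) ^ 2 / 2 + (2 / 3 * s) ^ 3 / 5 := by
    have taylor := exp_bound' (x := 2 / 3 * s) (by positivity) (by linarith) (n := 4) (by norm_num)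
    norm_num [sum_range_succ, Nat.factorial] at taylor
    have : (2 / 3 * s) ^ 3 * (2 / 3 * s) ≤ (2 / 3 * s) ^ 3 * (1 / 2) := by gcongr; linarith
    nlinarith [pow_nonneg hs 3]
  calc (1 + s / 6 / (1 - exp 1 * (s / 6))) * exp (2 / 3 * s) - (1 - s ^ 2) * (s / 6 + 2 / 3 * s)
      ≤ (1 + (s / 6 + 21 / 5 * (s / 6) ^ 2)) *
          (1 + 2 / 3 * s + (2 / 3 * s) ^ 2 / 2 + (2 / 3 * s) ^ 3 / 5) -
            (1 - s ^ 2) * (s / 6 + 2 / 3 * s) := by gcongr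
    _ ≤ 1 + s ^ 2 + (s ^ 2) ^ 2 / 2 := by
        have gap : 0 ≤ 0.71 - s := by linarith
        nlinarith [mul_nonneg (pow_nonneg hs 2) gap, mul_nonneg (pow_nonneg hs 3) gap,
          mul_nonneg (pow_nonneg hs 4) gap, mul_nonneg (pow_nonneg hs 2) (sq_nonneg (0.71 - s))]
    _ ≤ exp (s ^ 2) := quadratic_le_exp_of_nonneg (sq_nonneg s)

/-- The parameters `x = √u / 6` and `y = 2 / 3 * √u` are chosen so that the contribution of a single
letter stays below `exp u` while `x * y = u / 9` is as large as the final constant requires. -/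
lemma sum_siteWeight_le_exp {u : ℝ} (hu : 0 < u) (hu2 : u ≤ 1 / 2) {n : ℕ} (hn : 1 ≤ n) :
    ∑ k ∈ range (n + 1), ∑ l ∈ range (n + 1),
      siteWeight u k l * ((√u / 6) ^ k / k !) * ((2 / 3 * √u) ^ l / l !) ≤ exp u := by
  have sq_sqrt_u : √u ^ 2 = u := sq_sqrt hu.le
  have hex : exp 1 * (√u / 6) < 1 := by
    nlinarith [exp_one_lt_d9, sqrt_nonneg u, sqrt_le_one.2 (hu2.trans one_half_lt_one.le)]
  refine (sum_siteWeight_le u (by positivity) (by positivity) hex hn).trans ?_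
  simpa only [sq_sqrt_u] using
    one_add_div_mul_exp_sub_le_exp_sq (sqrt_nonneg u) (by rwa [sq_sqrt_u])

end Numerics

section Counting

open Finset Function
open scoped Nat

variable {ι κ : Type*} [Fintype κ] [DecidableEq ι]

/-- The number of occurrences of the letter `a` in the three words together. -/
def totalOcc (I J K : κ → ι) (a : ι) : ℕ := occ I a + occ J a + occ K a

/-- The necessary condition, provided by the two cancellations, for the expectation of
`∏ l, φ (X (I l)) (X (J l)) (X (K l))` over independent `X a` not to vanish: no letter of `I` occurs
just once in total, and `J l`, `K l` never both do. -/
def NonVanishing (I J K : κ → ι) : Prop :=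
  (∀ l, totalOcc I J K (I l) ≠ 1) ∧
    ∀ l, ¬(totalOcc I J K (J l) = 1 ∧ totalOcc I J K (K l) = 1)

/-- The letters that occur exactly once in the two words together. -/
def soleLetters [Fintype ι] (I B : κ → ι) : Finset ι := {a | occ I a + occ B a = 1}

lemma occ_piecewise_add_occ_piecewise [DecidableEq κ] (s : Finset κ) (J K : κ → ι) (a : ι) :
    occ (s.piecewise J K) a + occ (s.piecewise K J) a = occ J a + occ K a := by
  simp only [occ, card_filter, ← sum_add_distrib]
  refine sum_congr rfl fun l _ => ?_
  by_cases hl : l ∈ s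
  · simp only [piecewise_eq_of_mem _ _ _ hl]
  · simp only [piecewise_eq_of_notMem _ _ _ hl, add_comm]

variable [Fintype ι]

/-- Put the letters `K l` occurring only once in total into the covering word: a letter not covered
then occurs once among all three words, either in `I` or jointly with its companion. -/
lemma NonVanishing.exists_piecewise_cover [DecidableEq κ] {I J K : κ → ι}
    (h : NonVanishing I J K) :
    ∃ s : Finset κ, ∀ a ∈ soleLetters I (s.piecewise J K), ∃ l, s.piecewise K J l = a := by
  set s : Finset κ := {l | totalOcc I J K (K l) = 1}
  refine ⟨s, fun a ha => ?_⟩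
  rw [← occ_pos_iff]
  by_contra hzero
  have hsole : occ I a + occ (s.piecewise J K) a = 1 := (mem_filter.1 ha).2
  have htotal : totalOcc I J K a = 1 := by
    have := occ_piecewise_add_occ_piecewise s J K a
    unfold totalOcc
    omega
  obtain hI | hB : 0 < occ I a ∨ 0 < occ (s.piecewise J K) a := by omega
  · obtain ⟨l, rfl⟩ := occ_pos_iff.1 hI
    exact h.1 l htotal
  · obtain ⟨l, rfl⟩ := occ_pos_iff.1 hB
    by_cases hl : l ∈ s
    · rw [piecewise_eq_of_mem _ _ _ hl] at htotal
      exact h.2 l ⟨htotal, (mem_filter.1 hl).2⟩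
    · rw [piecewise_eq_of_notMem _ _ _ hl] at htotal
      exact hl (mem_filter.2 ⟨mem_univ l, htotal⟩)

variable [DecidableEq κ]

open Classical in
lemma card_nonVanishing_le_sum (I : κ → ι) :
    #{p : (κ → ι) × (κ → ι) | NonVanishing I p.1 p.2} ≤
      2 ^ Fintype.card κ *
        ∑ B : κ → ι, #{F : κ → ι | ∀ a ∈ soleLetters I B, ∃ l, F l = a} := by
  choose! s hs using fun (p : (κ → ι) × (κ → ι)) (h : NonVanishing I p.1 p.2) =>
    h.exists_piecewise_cover
  let swap (p : (κ → ι) × (κ → ι)) : Finset κ × (Σ _ : κ → ι, κ → ι) :=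
    (s p, ⟨(s p).piecewise p.1 p.2, (s p).piecewise p.2 p.1⟩)
  calc #{p : (κ → ι) × (κ → ι) | NonVanishing I p.1 p.2}
      ≤ #((univ : Finset (Finset κ)) ×ˢ (univ : Finset (κ → ι)).sigma fun B =>
          ({F | ∀ a ∈ soleLetters I B, ∃ l, F l = a} : Finset (κ → ι))) := by
        refine card_le_card_of_injOn swap (fun p hp => ?_) fun p _ q _ hpq => ?_
        · simpa [swap] using hs p (mem_filter.1 hp).2
        · obtain ⟨hs_eq, hB, hF⟩ : s p = s q ∧ (s p).piecewise p.1 p.2 = (s q).piecewise q.1 q.2 ∧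
              (s p).piecewise p.2 p.1 = (s q).piecewise q.2 q.1 := by simpa [swap] using hpq
          have restore (J K : κ → ι) : (s q).piecewise ((s q).piecewise J K)
              ((s q).piecewise K J) = J := by
            simp [piecewise_same]
          rw [hs_eq] at hB hF
          exact Prod.ext (by rw [← restore p.1 p.2, hB, hF, restore])
            (by rw [← restore p.2 p.1, hB, hF, restore])
    _ = _ := by rw [card_product, card_univ, Fintype.card_finset, card_sigma]

open Classical in
lemma card_nonVanishing_le [Nonempty ι] (I : κ → ι) :
    (#{p : (κ → ι) × (κ → ι) | NonVanishing I p.1 p.2} : ℝ) ≤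
      (2 * Fintype.card ι) ^ Fintype.card κ *
        ∑ B : κ → ι, (Fintype.card κ / Fintype.card ι : ℝ) ^ #(soleLetters I B) := by
  calc (#{p : (κ → ι) × (κ → ι) | NonVanishing I p.1 p.2} : ℝ)
      ≤ 2 ^ Fintype.card κ *
          ∑ B : κ → ι, (#{F : κ → ι | ∀ a ∈ soleLetters I B, ∃ l, F l = a} : ℝ) :=
        mod_cast card_nonVanishing_le_sum I
    _ ≤ 2 ^ Fintype.card κ * ∑ B : κ → ι, (Fintype.card ι : ℝ) ^ Fintype.card κ *
          (Fintype.card κ / Fintype.card ι : ℝ) ^ #(soleLetters I B) := by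
        gcongr with B
        rw [div_pow, ← mul_div_assoc, le_div_iff₀ (pow_pos (mod_cast Fintype.card_pos) _)]
        exact mod_cast card_cover_mul_le (κ := κ) (soleLetters I B)
    _ = _ := by rw [← mul_sum, mul_pow, mul_assoc]

omit [DecidableEq κ] in
lemma prod_siteWeight (u : ℝ) (I B : κ → ι) :
    ∏ a, siteWeight u (occ I a) (occ B a) =
      (∏ a, (occ I a : ℝ) ^ occ I a) * u ^ #(soleLetters I B) := by
  simp only [siteWeight, prod_mul_distrib, soleLetters, ← prod_const, prod_filter]

lemma sum_prod_siteWeight_le [Nonempty κ] (hκ : 2 * Fintype.card κ ≤ Fintype.card ι) :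
    ∑ I : κ → ι, ∑ B : κ → ι,
        ∏ a, siteWeight (Fintype.card κ / Fintype.card ι : ℝ) (occ I a) (occ B a) ≤
      (9 * Fintype.card ι) ^ Fintype.card κ * (Fintype.card κ)! *
        ((Fintype.card κ)! * (Real.exp 1 / Fintype.card κ) ^ Fintype.card κ) := by
  have hn1 : 1 ≤ Fintype.card κ := Fintype.card_pos
  set n := Fintype.card κ
  set N := Fintype.card ι
  have hN : (0 : ℝ) < N := by exact_mod_cast (by omega : 0 < N)
  set u : ℝ := n / N with hu
  have u_pos : 0 < u := div_pos (mod_cast hn1) hN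
  have u_le : u ≤ 1 / 2 := by
    rw [hu, div_le_div_iff₀ hN two_pos]
    exact_mod_cast (by omega : n * 2 ≤ 1 * N)
  have xy_inv : (√u / 6 * (2 / 3 * √u))⁻¹ = 9 * N / n := by
    rw [show √u / 6 * (2 / 3 * √u) = u / 9 by linarith [Real.mul_self_sqrt u_pos.le], inv_div, hu,
      div_div_eq_mul_div]
  have weight_nonneg := siteWeight_nonneg u_pos.le
  calc ∑ I : κ → ι, ∑ B : κ → ι, ∏ a, siteWeight u (occ I a) (occ B a)
      ≤ n ! ^ 2 * ((√u / 6 * (2 / 3 * √u)) ^ n)⁻¹ *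
          (∑ k ∈ range (n + 1), ∑ l ∈ range (n + 1),
            siteWeight u k l * ((√u / 6) ^ k / k !) * ((2 / 3 * √u) ^ l / l !)) ^ N :=
        sum_prod_occ_le weight_nonneg (by positivity) (by positivity)
    _ ≤ n ! ^ 2 * ((√u / 6 * (2 / 3 * √u)) ^ n)⁻¹ * Real.exp u ^ N := by
        gcongr
        · exact sum_nonneg fun k _ => sum_nonneg fun l _ =>
            mul_nonneg (mul_nonneg (weight_nonneg k l) (by positivity)) (by positivity)
        · exact sum_siteWeight_le_exp u_pos u_le hn1
    _ = n ! ^ 2 * (9 * N / n) ^ n * Real.exp 1 ^ n := by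
        rw [← inv_pow, xy_inv, ← Real.exp_nat_mul, ← Real.exp_nat_mul, hu,
          mul_div_cancel₀ _ hN.ne', mul_one]
    _ = (9 * N) ^ n * n ! * (n ! * (Real.exp 1 / n) ^ n) := by
        simp only [div_pow]
        ring

open Classical in
lemma sum_prod_mul_card_nonVanishing_le [Nonempty κ]
    (hκ : 2 * Fintype.card κ ≤ Fintype.card ι) :
    ∑ I : κ → ι, (∏ a, (occ I a : ℝ) ^ occ I a) *
        #{p : (κ → ι) × (κ → ι) | NonVanishing I p.1 p.2} ≤
      (Fintype.card ι : ℝ) ^ (2 * Fintype.card κ) * (Fintype.card κ)! *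
        (18 ^ Fintype.card κ *
          ((Fintype.card κ)! * (Real.exp 1 / Fintype.card κ) ^ Fintype.card κ)) := by
  have : Nonempty ι := Fintype.card_pos_iff.1 (by have := Fintype.card_pos (α := κ); omega)
  set n := Fintype.card κ
  set N := Fintype.card ι
  calc ∑ I : κ → ι, (∏ a, (occ I a : ℝ) ^ occ I a) *
        (#{p : (κ → ι) × (κ → ι) | NonVanishing I p.1 p.2} : ℝ)
      ≤ ∑ I : κ → ι, (∏ a, (occ I a : ℝ) ^ occ I a) *
          ((2 * N) ^ n * ∑ B : κ → ι, (n / N : ℝ) ^ #(soleLetters I B)) := by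
        gcongr with I
        exact card_nonVanishing_le I
    _ = (2 * N) ^ n *
          ∑ I : κ → ι, ∑ B : κ → ι, ∏ a, siteWeight (n / N : ℝ) (occ I a) (occ B a) := by
        simp only [prod_siteWeight, mul_sum]
        exact sum_congr rfl fun I _ => sum_congr rfl fun B _ => by ring
    _ ≤ (2 * N) ^ n * ((9 * N) ^ n * n ! * (n ! * (Real.exp 1 / n) ^ n)) := by
        gcongr
        exact sum_prod_siteWeight_le hκ
    _ = (N : ℝ) ^ (2 * n) * n ! * (18 ^ n * (n ! * (Real.exp 1 / n) ^ n)) := by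
        rw [two_mul n, pow_add, show (18 : ℝ) = 2 * 9 by norm_num]
        simp only [mul_pow]
        ring

end Counting

section AnalyticSets

open Set Filter
open scoped ENNReal Topology

variable {α : Type*} [MeasurableSpace α]

lemma exists_lt_measure_image_box {μ : Measure α} {f : (ℕ → ℕ) → α} {c : ℝ≥0∞}
    (hc : c < μ (range f)) : ∃ k : ℕ → ℕ, ∀ n, c < μ (f '' {x | ∀ i < n, x i ≤ k i}) := by
  have refine_box (n : ℕ) (B : Set (ℕ → ℕ)) (hB : c < μ (f '' B)) :
      ∃ j, c < μ (f '' (B ∩ {x | x n ≤ j})) := by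
    have mono : Monotone fun j => f '' (B ∩ {x | x n ≤ j}) := fun _ _ hj =>
      image_mono (inter_subset_inter_right B fun x (hx : x n ≤ _) => hx.trans hj)
    have exhaust : ⋃ j, {x : ℕ → ℕ | x n ≤ j} = univ :=
      iUnion_eq_univ_iff.2 fun x => ⟨x n, le_refl (x n)⟩
    rwa [← inter_univ B, ← exhaust, inter_iUnion, image_iUnion, mono.measure_iUnion,
      lt_iSup_iff] at hB
  choose! j hj using refine_box
  let B (n : ℕ) : Set (ℕ → ℕ) := n.rec univ fun n B => B ∩ {x | x n ≤ j n B}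
  have lt_measure (n : ℕ) : c < μ (f '' B n) := by
    induction n with
    | zero => rwa [← image_univ] at hc
    | succ n ih => exact hj n (B n) ih
  have subset_box (n : ℕ) : B n ⊆ {x | ∀ i < n, x i ≤ j i (B i)} := by
    induction n with
    | zero => exact fun x _ i hi => absurd hi i.not_lt_zero
    | succ n ih => exact fun x hx => Nat.forall_lt_succ_right.2 ⟨ih hx.1, hx.2⟩
  exact ⟨fun n => j n (B n), fun n =>
    (lt_measure n).trans_le (measure_mono (image_mono (subset_box n)))⟩

lemma exists_box_subset {k : ℕ → ℕ} {V : Set (ℕ → ℕ)} (hV : IsOpen V)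
    (hkV : univ.pi (fun i => Iic (k i)) ⊆ V) : ∃ n, {x | ∀ i < n, x i ≤ k i} ⊆ V := by
  let := PiNat.metricSpaceNatNat
  have compact : IsCompact (univ.pi fun i => Iic (k i)) :=
    isCompact_univ_pi fun i => (finite_Iic (k i)).isCompact
  obtain ⟨δ, hδ, thickening_subset⟩ := compact.exists_thickening_subset_open hV hkV
  obtain ⟨n, hn⟩ := exists_pow_lt_of_lt_one hδ one_half_lt_one
  refine ⟨n, fun x hx => thickening_subset <| Metric.mem_thickening_iff.2
    ⟨fun i => if i < n then x i else 0, fun i _ => ?_, lt_of_le_of_lt ?_ hn⟩⟩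
  · simp only [mem_Iic]
    split_ifs with hi
    exacts [hx i hi, zero_le]
  · exact PiNat.mem_cylinder_iff_dist_le.1 fun i hi => (if_pos hi).symm

variable [TopologicalSpace α]

lemma exists_isCompact_subset_range_le_measure {μ : Measure α} [μ.OuterRegular]
    {f : (ℕ → ℕ) → α} (hf : Continuous f) {c : ℝ≥0∞} (hc : c < μ (range f)) :
    ∃ K ⊆ range f, IsCompact K ∧ c ≤ μ K := by
  obtain ⟨k, hk⟩ := exists_lt_measure_image_box hc
  have compact : IsCompact (univ.pi fun i => Iic (k i)) :=
    isCompact_univ_pi fun i => (finite_Iic (k i)).isCompact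
  refine ⟨f '' univ.pi fun i => Iic (k i), image_subset_range _ _, compact.image hf, ?_⟩
  by_contra! hlt
  obtain ⟨U, hKU, hU, hUc⟩ := exists_isOpen_lt_of_lt _ _ hlt
  obtain ⟨n, hn⟩ := exists_box_subset (hU.preimage hf) (image_subset_iff.1 hKU)
  exact ((hk n).trans_le (measure_mono (image_subset_iff.2 hn))).not_gt hUc

lemma nullMeasurableSet_of_analyticSet [T2Space α] [BorelSpace α] (μ : Measure α)
    [IsFiniteMeasure μ] [μ.OuterRegular] {A : Set α} (hA : AnalyticSet A) :
    NullMeasurableSet A μ := by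
  rw [AnalyticSet] at hA
  obtain rfl | ⟨f, hf, rfl⟩ := hA
  · exact .empty
  obtain h0 | h0 := eq_zero_or_pos (μ (range f))
  · exact .of_null h0
  obtain ⟨c, -, hc, hlim⟩ := exists_seq_strictMono_tendsto' h0
  choose K hKf hK hcK using fun n => exists_isCompact_subset_range_le_measure hf (hc n).2
  have meas : MeasurableSet (⋃ n, K n) := .iUnion fun n => (hK n).measurableSet
  have measure_le : μ (range f) ≤ μ (⋃ n, K n) :=
    le_of_tendsto' hlim fun n => (hcK n).trans (measure_mono (subset_iUnion K n))
  exact meas.nullMeasurableSet.congr <| ae_eq_of_subset_of_measure_ge (iUnion_subset hKf)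
    measure_le meas.nullMeasurableSet (measure_ne_top _ _)

end AnalyticSets

section Envelope

open Set

variable {X : Type*}

/-- The envelope `x ↦ sup_{z, z'} |φ x z z'|`, meaningful when the family is bounded. -/
noncomputable def envelope (φ : X → X → X → ℝ) (x : X) : ℝ := ⨆ z, ⨆ z', |φ x z z'|

variable {φ : X → X → X → ℝ} {C : ℝ}

lemma envelope_nonneg (φ : X → X → X → ℝ) (x : X) : 0 ≤ envelope φ x :=
  Real.iSup_nonneg fun _ => Real.iSup_nonneg fun _ => abs_nonneg _

lemma abs_le_envelope (hC : ∀ x z z', |φ x z z'| ≤ C) (x z z' : X) :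
    |φ x z z'| ≤ envelope φ x := by
  have inner_bdd (z : X) : BddAbove (range fun z' => |φ x z z'|) :=
    ⟨C, forall_mem_range.2 (hC x z)⟩
  have outer_bdd : BddAbove (range fun z => ⨆ z', |φ x z z'|) :=
    have : Nonempty X := ⟨x⟩
    ⟨C, forall_mem_range.2 fun z => ciSup_le (hC x z)⟩
  exact (le_ciSup (inner_bdd z) z').trans (le_ciSup outer_bdd z)

lemma envelope_le (hC : ∀ x z z', |φ x z z'| ≤ C) (x : X) : envelope φ x ≤ C :=
  have : Nonempty X := ⟨x⟩
  ciSup_le fun z => ciSup_le (hC x z)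

lemma lt_envelope_iff (hC : ∀ x z z', |φ x z z'| ≤ C) {a : ℝ} {x : X} :
    a < envelope φ x ↔ ∃ z z', a < |φ x z z'| := by
  have : Nonempty X := ⟨x⟩
  refine ⟨fun h => ?_, fun ⟨z, z', h⟩ => h.trans_le (abs_le_envelope hC x z z')⟩
  obtain ⟨z, hz⟩ := exists_lt_of_lt_ciSup h
  exact ⟨z, exists_lt_of_lt_ciSup hz⟩

/-- The envelope is a supremum over uncountably many points, so it need not be measurable; its
superlevel sets are projections of measurable sets, hence analytic. -/
lemma aemeasurable_envelope [MeasurableSpace X] [StandardBorelSpace X] (μ : Measure X)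
    [IsFiniteMeasure μ] (hφ : Measurable fun p : X × X × X => φ p.1 p.2.1 p.2.2)
    (hC : ∀ x z z', |φ x z z'| ≤ C) : AEMeasurable (envelope φ) μ := by
  let := upgradeStandardBorel X
  let := TopologicalSpace.upgradeIsCompletelyMetrizable X
  suffices superlevel : ∀ a : ℝ, NullMeasurableSet (envelope φ ⁻¹' Ioi a) μ from
    NullMeasurable.aemeasurable (measurable_of_Ioi (δ := NullMeasurableSpace X μ) superlevel)
  intro a
  have image_fst : envelope φ ⁻¹' Ioi a =
      Prod.fst '' {p : X × X × X | a < |φ p.1 p.2.1 p.2.2|} := by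
    ext x
    simp [lt_envelope_iff hC]
  rw [image_fst]
  exact nullMeasurableSet_of_analyticSet μ <|
    (measurableSet_lt measurable_const hφ.abs).analyticSet_image measurable_fst

end Envelope

section ProductMeasure

open Finset Function
open scoped ENNReal

variable {ι : Type*} [Fintype ι] {X : ι → Type*} [∀ i, MeasurableSpace (X i)]
  {μ : ∀ i, Measure (X i)}

lemma lintegral_pi_ofReal_prod [∀ i, SigmaFinite (μ i)] {f : ∀ i, X i → ℝ}
    (hf : ∀ i, Integrable (f i) (μ i)) (hf0 : ∀ i x, 0 ≤ f i x) :
    ∫⁻ Y, ENNReal.ofReal (∏ i, f i (Y i)) ∂Measure.pi μ =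
      ∏ i, ∫⁻ x, ENNReal.ofReal (f i x) ∂μ i := by
  rw [← ofReal_integral_eq_lintegral_ofReal (.fintype_prod_dep hf)
    (.of_forall fun Y => prod_nonneg fun i _ => hf0 i (Y i)), integral_fintype_prod_eq_prod,
    ENNReal.ofReal_prod_of_nonneg fun i _ => integral_nonneg (hf0 i)]
  exact prod_congr rfl fun i _ =>
    ofReal_integral_eq_lintegral_ofReal (hf i) (.of_forall (hf0 i))

lemma pi_withDensity_ofReal [∀ i, SigmaFinite (μ i)] {f : ∀ i, X i → ℝ}
    (hf : ∀ i, Integrable (f i) (μ i)) (hf0 : ∀ i x, 0 ≤ f i x) :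
    Measure.pi (fun i => (μ i).withDensity fun x => ENNReal.ofReal (f i x)) =
      (Measure.pi μ).withDensity fun Y => ENNReal.ofReal (∏ i, f i (Y i)) := by
  have (i : ι) : IsFiniteMeasure ((μ i).withDensity fun x => ENNReal.ofReal (f i x)) :=
    isFiniteMeasure_withDensity_ofReal (hf i).2
  refine Measure.pi_eq fun s hs => ?_
  rw [withDensity_apply _ (.univ_pi hs), Measure.restrict_pi_pi,
    lintegral_pi_ofReal_prod (fun i => (hf i).restrict) hf0]
  exact prod_congr rfl fun i _ => (withDensity_apply _ (hs i)).symm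

variable [DecidableEq ι] [∀ i, IsProbabilityMeasure (μ i)]

lemma measurePreserving_update (a : ι) :
    MeasurePreserving (fun p : (∀ i, X i) × X a => update p.1 a p.2)
      ((Measure.pi μ).prod (μ a)) (Measure.pi μ) := by
  refine ⟨measurable_update', (Measure.pi_eq fun s hs => ?_).symm⟩
  have preimage_box : (fun p : (∀ i, X i) × X a => update p.1 a p.2) ⁻¹' Set.univ.pi s =
      Set.univ.pi (update s a Set.univ) ×ˢ s a := by
    ext p
    simp only [Set.mem_preimage, Set.mem_univ_pi, Set.mem_prod, forall_update_iff,
      forall_update_iff s fun i t => p.1 i ∈ t]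
    simp [and_comm]
  rw [Measure.map_apply measurable_update' (.univ_pi hs), preimage_box, Measure.prod_prod,
    Measure.pi_pi, ← prod_erase_mul univ _ (mem_univ a), ← prod_erase_mul univ _ (mem_univ a),
    update_self, measure_univ, mul_one]
  congr 1
  exact prod_congr rfl fun i hi => by rw [update_of_ne (ne_of_mem_erase hi)]

lemma integral_integral_update {f : (∀ i, X i) → ℝ} (hf : Integrable f (Measure.pi μ)) (a : ι) :
    ∫ Y, ∫ x, f (update Y a x) ∂μ a ∂Measure.pi μ = ∫ Y, f Y ∂Measure.pi μ := by
  have preserving := measurePreserving_update (μ := μ) a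
  rw [integral_integral (f := fun Y x => f (update Y a x))
    (preserving.integrable_comp_of_integrable hf)]
  nth_rw 2 [← preserving.map_eq]
  rw [integral_map preserving.aemeasurable (by rw [preserving.map_eq]; exact hf.1)]

lemma integral_integral_update_update {f : (∀ i, X i) → ℝ} (hf : Integrable f (Measure.pi μ))
    (a b : ι) :
    ∫ Y, ∫ x, ∫ y, f (update (update Y a x) b y) ∂μ b ∂μ a ∂Measure.pi μ =
      ∫ Y, f Y ∂Measure.pi μ := by
  have preserving := measurePreserving_update (μ := μ) b
  rw [integral_integral_update (f := fun Y => ∫ y, f (update Y b y) ∂μ b)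
    (preserving.integrable_comp_of_integrable hf).integral_prod_left, integral_integral_update hf]

end ProductMeasure

section Moments

open Finset Function

variable {ι κ X : Type*} [Fintype κ] {φ : X → X → X → ℝ} {F : X → ℝ}

lemma measurable_prod_comp [MeasurableSpace X]
    (hφ : Measurable fun p : X × X × X => φ p.1 p.2.1 p.2.2) (I J K : κ → ι) :
    Measurable fun Y : ι → X => ∏ l, φ (Y (I l)) (Y (J l)) (Y (K l)) :=
  Finset.measurable_fun_prod _ fun l _ =>
    hφ.comp (by fun_prop : Measurable fun Y : ι → X => (Y (I l), Y (J l), Y (K l)))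

variable [Fintype ι]

lemma abs_prod_comp_le [DecidableEq ι] (hF : ∀ x z z', |φ x z z'| ≤ F x) (I J K : κ → ι)
    (Y : ι → X) :
    |∏ l, φ (Y (I l)) (Y (J l)) (Y (K l))| ≤ ∏ a, F (Y a) ^ occ I a := by
  rw [← prod_comp_eq_prod_pow_occ I fun a => F (Y a), abs_prod]
  exact prod_le_prod (fun _ _ => abs_nonneg _) fun _ _ => hF _ _ _

variable [MeasurableSpace X] {μ : Measure X} [IsProbabilityMeasure μ]

lemma integrable_prod_comp (hφ : Measurable fun p : X × X × X => φ p.1 p.2.1 p.2.2)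
    (hF : ∀ x z z', |φ x z z'| ≤ F x) (hFint : ∀ k : ℕ, Integrable (fun x => F x ^ k) μ)
    (I J K : κ → ι) :
    Integrable (fun Y => ∏ l, φ (Y (I l)) (Y (J l)) (Y (K l))) (Measure.pi fun _ : ι => μ) := by
  classical
  exact .mono' (.fintype_prod (f := fun a x => F x ^ occ I a) fun _ => hFint _)
    (measurable_prod_comp hφ I J K).aestronglyMeasurable
    (.of_forall (abs_prod_comp_le hF I J K))

variable [DecidableEq ι]

lemma integral_prod_comp_le (hφ : Measurable fun p : X × X × X => φ p.1 p.2.1 p.2.2)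
    (hF : ∀ x z z', |φ x z z'| ≤ F x) (hFint : ∀ k : ℕ, Integrable (fun x => F x ^ k) μ)
    {S : ℝ} (hS : ∀ k : ℕ, 1 ≤ k → ∫ x, F x ^ k ∂μ ≤ (S * k) ^ k) (I J K : κ → ι) :
    ∫ Y, ∏ l, φ (Y (I l)) (Y (J l)) (Y (K l)) ∂Measure.pi (fun _ : ι => μ) ≤
      S ^ Fintype.card κ * ∏ a, (occ I a : ℝ) ^ occ I a := by
  calc ∫ Y, ∏ l, φ (Y (I l)) (Y (J l)) (Y (K l)) ∂Measure.pi (fun _ : ι => μ)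
      ≤ ∫ Y, ∏ a, F (Y a) ^ occ I a ∂Measure.pi (fun _ : ι => μ) :=
        integral_mono (integrable_prod_comp hφ hF hFint I J K)
          (.fintype_prod (f := fun a x => F x ^ occ I a) fun _ => hFint _)
          fun Y => (le_abs_self _).trans (abs_prod_comp_le hF I J K Y)
    _ = ∏ a, ∫ x, F x ^ occ I a ∂μ :=
        integral_fintype_prod_eq_prod (μ := fun _ : ι => μ) fun a x => F x ^ occ I a
    _ ≤ ∏ a, (S * occ I a) ^ occ I a := by
        refine prod_le_prod (fun a _ => integral_nonneg fun x => ?_) fun a _ => ?_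
        · exact pow_nonneg ((abs_nonneg _).trans (hF x x x)) _
        · obtain h | h := Nat.eq_zero_or_pos (occ I a)
          · simp [h]
          · exact hS _ h
    _ = S ^ Fintype.card κ * ∏ a, (occ I a : ℝ) ^ occ I a := by
        simp only [mul_pow, prod_mul_distrib, ← prod_comp_eq_prod_pow_occ I fun _ => S, prod_const,
          card_univ]

lemma integral_prod_comp_eq_zero_of_totalOcc_fst (hcancel : ∀ z z', ∫ x, φ x z z' ∂μ = 0)
    {I J K : κ → ι} (hint : Integrable (fun Y => ∏ l, φ (Y (I l)) (Y (J l)) (Y (K l)))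
      (Measure.pi fun _ : ι => μ)) {l : κ} (hl : totalOcc I J K (I l) = 1) :
    ∫ Y, ∏ l, φ (Y (I l)) (Y (J l)) (Y (K l)) ∂Measure.pi (fun _ : ι => μ) = 0 := by
  have hI := occ_apply_pos I l
  unfold totalOcc at hl
  have J_ne := ne_apply_of_occ_eq_zero (f := J) (a := I l) (by omega)
  have K_ne := ne_apply_of_occ_eq_zero (f := K) (a := I l) (by omega)
  have I_ne {l' : κ} (hl' : l' ≠ l) : I l' ≠ I l := apply_ne_apply_of_occ_eq_one (by omega) hl'
  rw [← integral_integral_update hint (I l)]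
  refine integral_eq_zero_of_ae (.of_forall fun Y => ?_)
  classical
  have factor (x : X) : ∏ l', φ (update Y (I l) x (I l')) (update Y (I l) x (J l'))
      (update Y (I l) x (K l')) = φ x (Y (J l)) (Y (K l)) *
        ∏ l' ∈ univ.erase l, φ (Y (I l')) (Y (J l')) (Y (K l')) := by
    rw [← mul_prod_erase _ _ (mem_univ l), update_self]
    simp only [update_of_ne (J_ne _), update_of_ne (K_ne _)]
    congr 1
    exact prod_congr rfl fun l' hl' => by rw [update_of_ne (I_ne (ne_of_mem_erase hl'))]
  simp only [factor, integral_mul_const, hcancel, zero_mul, Pi.zero_apply]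

lemma integral_prod_comp_eq_zero_of_totalOcc_snd_thd
    (hcancel : ∀ x, ∫ z, ∫ z', φ x z z' ∂μ ∂μ = 0)
    {I J K : κ → ι} (hint : Integrable (fun Y => ∏ l, φ (Y (I l)) (Y (J l)) (Y (K l)))
      (Measure.pi fun _ : ι => μ)) {l : κ}
    (hJ : totalOcc I J K (J l) = 1) (hK : totalOcc I J K (K l) = 1) :
    ∫ Y, ∏ l, φ (Y (I l)) (Y (J l)) (Y (K l)) ∂Measure.pi (fun _ : ι => μ) = 0 := by
  have occ_J := occ_apply_pos J l
  have occ_K := occ_apply_pos K l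
  unfold totalOcc at hJ hK
  have I_ne_J := ne_apply_of_occ_eq_zero (f := I) (a := J l) (by omega)
  have I_ne_K := ne_apply_of_occ_eq_zero (f := I) (a := K l) (by omega)
  have K_ne_J := ne_apply_of_occ_eq_zero (f := K) (a := J l) (by omega)
  have J_ne_K := ne_apply_of_occ_eq_zero (f := J) (a := K l) (by omega)
  have J_ne {l' : κ} (hl' : l' ≠ l) : J l' ≠ J l := apply_ne_apply_of_occ_eq_one (by omega) hl'
  have K_ne {l' : κ} (hl' : l' ≠ l) : K l' ≠ K l := apply_ne_apply_of_occ_eq_one (by omega) hl'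
  rw [← integral_integral_update_update hint (J l) (K l)]
  refine integral_eq_zero_of_ae (.of_forall fun Y => ?_)
  classical
  have factor (z z' : X) : ∏ l', φ (update (update Y (J l) z) (K l) z' (I l'))
      (update (update Y (J l) z) (K l) z' (J l')) (update (update Y (J l) z) (K l) z' (K l')) =
        φ (Y (I l)) z z' * ∏ l' ∈ univ.erase l, φ (Y (I l')) (Y (J l')) (Y (K l')) := by
    simp only [update_of_ne (I_ne_K _), update_of_ne (I_ne_J _), update_of_ne (J_ne_K _)]
    rw [← mul_prod_erase _ _ (mem_univ l), update_self, update_self]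
    congr 1
    refine prod_congr rfl fun l' hl' => ?_
    have hne := ne_of_mem_erase hl'
    rw [update_of_ne (J_ne hne), update_of_ne (K_ne hne), update_of_ne (K_ne_J l')]
  simp only [factor, integral_mul_const, hcancel, zero_mul, Pi.zero_apply]

lemma integral_prod_comp_eq_zero (hcancel₁ : ∀ z z', ∫ x, φ x z z' ∂μ = 0)
    (hcancel₂ : ∀ x, ∫ z, ∫ z', φ x z z' ∂μ ∂μ = 0)
    {I J K : κ → ι} (hint : Integrable (fun Y => ∏ l, φ (Y (I l)) (Y (J l)) (Y (K l)))
      (Measure.pi fun _ : ι => μ)) (h : ¬NonVanishing I J K) :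
    ∫ Y, ∏ l, φ (Y (I l)) (Y (J l)) (Y (K l)) ∂Measure.pi (fun _ : ι => μ) = 0 := by
  rw [NonVanishing, not_and_or, not_forall_not, not_forall_not] at h
  obtain ⟨l, hl⟩ | ⟨l, hJ, hK⟩ := h
  · exact integral_prod_comp_eq_zero_of_totalOcc_fst hcancel₁ hint hl
  · exact integral_prod_comp_eq_zero_of_totalOcc_snd_thd hcancel₂ hint hJ hK

omit [Fintype κ] [DecidableEq ι] in
lemma sum_sum_sum_pow {R : Type*} [CommSemiring R] (f : ι → ι → ι → R) (n : ℕ) :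
    (∑ i, ∑ j, ∑ k, f i j k) ^ n =
      ∑ I : Fin n → ι, ∑ p : (Fin n → ι) × (Fin n → ι), ∏ l, f (I l) (p.1 l) (p.2 l) := by
  classical
  have expand (g : Fin n → ι → R) : ∏ l, ∑ i, g l i = ∑ I : Fin n → ι, ∏ l, g l (I l) := by
    rw [prod_univ_sum, Fintype.piFinset_univ]
  calc (∑ i, ∑ j, ∑ k, f i j k) ^ n = ∏ _l : Fin n, ∑ i, ∑ j, ∑ k, f i j k := by
        rw [prod_const, card_univ, Fintype.card_fin]
    _ = _ := by simp only [expand, Fintype.sum_prod_type]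

omit [DecidableEq ι] in
lemma integral_sum_pow_le (hφ : Measurable fun p : X × X × X => φ p.1 p.2.1 p.2.2)
    (hcancel₁ : ∀ z z', ∫ x, φ x z z' ∂μ = 0) (hcancel₂ : ∀ x, ∫ z, ∫ z', φ x z z' ∂μ ∂μ = 0)
    (hF : ∀ x z z', |φ x z z'| ≤ F x) (hFint : ∀ k : ℕ, Integrable (fun x => F x ^ k) μ)
    {S : ℝ} (hS0 : 0 ≤ S) (hS : ∀ k : ℕ, 1 ≤ k → ∫ x, F x ^ k ∂μ ≤ (S * k) ^ k)
    {n : ℕ} [NeZero n] (hn : 2 * n ≤ Fintype.card ι) :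
    ∫ Y, (∑ i, ∑ j, ∑ k, φ (Y i) (Y j) (Y k)) ^ n ∂Measure.pi (fun _ : ι => μ) ≤
      S ^ n * (Fintype.card ι ^ (2 * n) * n.factorial *
        (18 ^ n * (n.factorial * (Real.exp 1 / n) ^ n))) := by
  classical
  have hint (I J K : Fin n → ι) := integrable_prod_comp (μ := μ) hφ hF hFint I J K
  calc ∫ Y, (∑ i, ∑ j, ∑ k, φ (Y i) (Y j) (Y k)) ^ n ∂Measure.pi (fun _ : ι => μ)
      = ∑ I : Fin n → ι, ∑ p : (Fin n → ι) × (Fin n → ι),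
          ∫ Y, ∏ l, φ (Y (I l)) (Y (p.1 l)) (Y (p.2 l)) ∂Measure.pi (fun _ : ι => μ) := by
        simp only [sum_sum_sum_pow]
        rw [integral_finsetSum _ fun I _ => integrable_finsetSum _ fun p _ => hint I p.1 p.2]
        exact sum_congr rfl fun I _ => integral_finsetSum _ fun p _ => hint I p.1 p.2
    _ ≤ ∑ I : Fin n → ι, ∑ p : (Fin n → ι) × (Fin n → ι),
          if NonVanishing I p.1 p.2 then S ^ n * ∏ a, (occ I a : ℝ) ^ occ I a else 0 := by
        gcongr with I _ p _
        split_ifs with h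
        · simpa using integral_prod_comp_le hφ hF hFint hS I p.1 p.2
        · exact (integral_prod_comp_eq_zero hcancel₁ hcancel₂ (hint I p.1 p.2) h).le
    _ = S ^ n * ∑ I : Fin n → ι, (∏ a, (occ I a : ℝ) ^ occ I a) *
          #{p : (Fin n → ι) × (Fin n → ι) | NonVanishing I p.1 p.2} := by
        rw [mul_sum]
        refine sum_congr rfl fun I _ => ?_
        rw [← sum_filter, sum_const, nsmul_eq_mul]
        ring
    _ ≤ S ^ n * (Fintype.card ι ^ (2 * n) * n.factorial *
          (18 ^ n * (n.factorial * (Real.exp 1 / n) ^ n))) := by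
        gcongr
        simpa using sum_prod_mul_card_nonVanishing_le (ι := ι) (κ := Fin n) (by simpa using hn)

omit [DecidableEq ι] in
lemma inv_factorial_mul_integral_pow_le
    (hφ : Measurable fun p : X × X × X => φ p.1 p.2.1 p.2.2)
    (hcancel₁ : ∀ z z', ∫ x, φ x z z' ∂μ = 0) (hcancel₂ : ∀ x, ∫ z, ∫ z', φ x z z' ∂μ ∂μ = 0)
    (hF : ∀ x z z', |φ x z z'| ≤ F x) (hFint : ∀ k : ℕ, Integrable (fun x => F x ^ k) μ)
    {S : ℝ} (hS0 : 0 ≤ S) (hS : ∀ k : ℕ, 1 ≤ k → ∫ x, F x ^ k ∂μ ≤ (S * k) ^ k)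
    {n : ℕ} (hn : 2 ≤ n) (hnι : 2 * n ≤ Fintype.card ι) :
    (n.factorial : ℝ)⁻¹ * ∫ Y, ((1 / (Fintype.card ι : ℝ) ^ 2) *
        ∑ i, ∑ j, ∑ k, φ (Y i) (Y j) (Y k)) ^ n ∂Measure.pi (fun _ : ι => μ) ≤
      n ^ 2 / 2 * (√(32 * Real.exp 1 ^ 3) * S) ^ n := by
  have : NeZero n := ⟨by omega⟩
  set N := Fintype.card ι
  have hN : (0 : ℝ) < N := mod_cast (by omega : 0 < N)
  simp only [mul_pow (1 / (N : ℝ) ^ 2), integral_const_mul]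
  calc (n.factorial : ℝ)⁻¹ * ((1 / (N : ℝ) ^ 2) ^ n *
        ∫ Y, (∑ i, ∑ j, ∑ k, φ (Y i) (Y j) (Y k)) ^ n ∂Measure.pi (fun _ : ι => μ))
      ≤ (n.factorial : ℝ)⁻¹ * ((1 / (N : ℝ) ^ 2) ^ n * (S ^ n * (N ^ (2 * n) * n.factorial *
          (18 ^ n * (n.factorial * (Real.exp 1 / n) ^ n))))) := by
        gcongr
        exact integral_sum_pow_le hφ hcancel₁ hcancel₂ hF hFint hS0 hS hnι
    _ = S ^ n * (18 ^ n * (n.factorial * (Real.exp 1 / n) ^ n)) := by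
        rw [one_div, inv_pow, ← pow_mul]
        field_simp
    _ ≤ S ^ n * (n ^ 2 / 2 * √(32 * Real.exp 1 ^ 3) ^ n) :=
        mul_le_mul_of_nonneg_left (pow_mul_factorial_mul_exp_div_pow_le hn) (by positivity)
    _ = n ^ 2 / 2 * (√(32 * Real.exp 1 ^ 3) * S) ^ n := by
        rw [mul_pow]
        ring

end Moments

section SubexponentialNorm

open Set Real

variable {X : Type*} [MeasurableSpace X] {μ : Measure X} {f : X → ℝ}

/-- The norm `sup_{p ≥ 1} ‖f‖_{L^p(μ)} / p`, equivalent to the Orlicz `ψ₁` norm, of a bounded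
nonnegative function `f`. -/
noncomputable def subexpNorm (μ : Measure X) (f : X → ℝ) : ℝ :=
  ⨆ p : {p : ℝ // 1 ≤ p}, (∫ x, f x ^ (p : ℝ) ∂μ) ^ (1 / (p : ℝ)) / (p : ℝ)

lemma integral_rpow_rpow_nonneg (hf0 : ∀ x, 0 ≤ f x) (p : ℝ) :
    0 ≤ (∫ x, f x ^ p ∂μ) ^ (1 / p) :=
  rpow_nonneg (integral_nonneg fun x => rpow_nonneg (hf0 x) p) _

lemma subexpNorm_nonneg (hf0 : ∀ x, 0 ≤ f x) : 0 ≤ subexpNorm μ f :=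
  iSup_nonneg fun p => div_nonneg (integral_rpow_rpow_nonneg hf0 p) (zero_le_one.trans p.2)

variable [IsProbabilityMeasure μ] {C : ℝ}

lemma integral_rpow_rpow_le (hf0 : ∀ x, 0 ≤ f x) (hfC : ∀ x, f x ≤ C) {p : ℝ} (hp : 1 ≤ p) :
    (∫ x, f x ^ p ∂μ) ^ (1 / p) ≤ C := by
  have p_pos : 0 < p := zero_lt_one.trans_le hp
  have : Nonempty X := nonempty_of_isProbabilityMeasure μ
  have C_nonneg : 0 ≤ C := this.elim fun x => (hf0 x).trans (hfC x)
  have moment_le : ∫ x, f x ^ p ∂μ ≤ C ^ p := by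
    have hbound (x : X) : ‖f x ^ p‖ ≤ C ^ p := by
      rw [norm_of_nonneg (rpow_nonneg (hf0 x) p)]
      exact rpow_le_rpow (hf0 x) (hfC x) p_pos.le
    simpa using (le_norm_self _).trans
      (norm_integral_le_of_norm_le_const (μ := μ) (.of_forall hbound))
  calc (∫ x, f x ^ p ∂μ) ^ (1 / p) ≤ (C ^ p) ^ (1 / p) := by
        gcongr
        exact integral_nonneg fun x => rpow_nonneg (hf0 x) p
    _ = C := by rw [one_div, rpow_rpow_inv C_nonneg p_pos.ne']

lemma integral_rpow_rpow_le_subexpNorm_mul (hf0 : ∀ x, 0 ≤ f x) (hfC : ∀ x, f x ≤ C) {p : ℝ}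
    (hp : 1 ≤ p) : (∫ x, f x ^ p ∂μ) ^ (1 / p) ≤ subexpNorm μ f * p := by
  refine (div_le_iff₀ (zero_lt_one.trans_le hp)).1 (le_ciSup (f := fun p : {p : ℝ // 1 ≤ p} =>
    (∫ x, f x ^ (p : ℝ) ∂μ) ^ (1 / (p : ℝ)) / (p : ℝ)) ⟨C, ?_⟩ ⟨p, hp⟩)
  exact forall_mem_range.2 fun q =>
    (div_le_self (integral_rpow_rpow_nonneg hf0 q) q.2).trans (integral_rpow_rpow_le hf0 hfC q.2)

lemma integral_pow_le_subexpNorm_mul_pow (hf0 : ∀ x, 0 ≤ f x) (hfC : ∀ x, f x ≤ C) {k : ℕ}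
    (hk : 1 ≤ k) : ∫ x, f x ^ k ∂μ ≤ (subexpNorm μ f * k) ^ k := by
  calc ∫ x, f x ^ k ∂μ = ((∫ x, f x ^ (k : ℝ) ∂μ) ^ (1 / (k : ℝ))) ^ k := by
        simp only [rpow_natCast, one_div]
        rw [rpow_inv_natCast_pow (integral_nonneg fun x => pow_nonneg (hf0 x) k) (by omega)]
    _ ≤ (subexpNorm μ f * k) ^ k := by
        gcongr
        · exact integral_rpow_rpow_nonneg hf0 k
        · exact integral_rpow_rpow_le_subexpNorm_mul hf0 hfC (mod_cast hk)

end SubexponentialNorm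

section LargeDeviation

variable {X : Type*} [MeasurableSpace X]

lemma inv_factorial_mul_integral_pow_le_subexpNorm [StandardBorelSpace X] {μ : Measure X}
    [IsProbabilityMeasure μ] {φ : X → X → X → ℝ}
    (hφ : Measurable fun p : X × X × X => φ p.1 p.2.1 p.2.2) {C : ℝ}
    (hC : ∀ x z z', |φ x z z'| ≤ C) (hcancel₁ : ∀ z z', ∫ x, φ x z z' ∂μ = 0)
    (hcancel₂ : ∀ x, ∫ z, ∫ z', φ x z z' ∂μ ∂μ = 0) {ι : Type*} [Fintype ι] {n : ℕ} (hn : 2 ≤ n)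
    (hnι : 2 * n ≤ Fintype.card ι) :
    (n.factorial : ℝ)⁻¹ * ∫ Y, ((1 / (Fintype.card ι : ℝ) ^ 2) *
        ∑ i, ∑ j, ∑ k, φ (Y i) (Y j) (Y k)) ^ n ∂Measure.pi (fun _ : ι => μ) ≤
      n ^ 2 / 2 * (√(32 * Real.exp 1 ^ 3) * subexpNorm μ (envelope φ)) ^ n := by
  have envelope_pow_integrable (k : ℕ) : Integrable (fun x => envelope φ x ^ k) μ := by
    refine .of_bound ((aemeasurable_envelope μ hφ hC).pow_const k).aestronglyMeasurable (C ^ k)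
      (.of_forall fun x => ?_)
    rw [Real.norm_of_nonneg (pow_nonneg (envelope_nonneg φ x) k)]
    exact pow_le_pow_left₀ (envelope_nonneg φ x) (envelope_le hC x) k
  exact inv_factorial_mul_integral_pow_le hφ hcancel₁ hcancel₂ (abs_le_envelope hC)
    envelope_pow_integrable (subexpNorm_nonneg (envelope_nonneg φ))
    (fun _ => integral_pow_le_subexpNorm_mul_pow (envelope_nonneg φ) (envelope_le hC)) hn hnι

variable {ν : Measure X} {ρ : X → ℝ}

lemma integral_withDensity_ofReal (hρ : Measurable ρ) (hρ0 : ∀ x, 0 ≤ ρ x) (g : X → ℝ) :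
    ∫ x, g x ∂ν.withDensity (fun x => ENNReal.ofReal (ρ x)) = ∫ x, g x * ρ x ∂ν := by
  rw [integral_withDensity_eq_integral_toReal_smul hρ.ennreal_ofReal
    (.of_forall fun _ => ENNReal.ofReal_lt_top)]
  simp only [ENNReal.toReal_ofReal (hρ0 _), smul_eq_mul, mul_comm]

lemma isProbabilityMeasure_withDensity_ofReal (hρ : Integrable ρ ν) (hρ0 : ∀ x, 0 ≤ ρ x)
    (hρ1 : ∫ x, ρ x ∂ν = 1) :
    IsProbabilityMeasure (ν.withDensity fun x => ENNReal.ofReal (ρ x)) :=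
  ⟨by rw [withDensity_apply _ .univ, Measure.restrict_univ,
    ← ofReal_integral_eq_lintegral_ofReal hρ (.of_forall hρ0), hρ1, ENNReal.ofReal_one]⟩

theorem stmt16_general [StandardBorelSpace X] [SigmaFinite ν] (hρ : Measurable ρ)
    (hρ0 : ∀ x, 0 ≤ ρ x) (hρ1 : ∫ x, ρ x ∂ν = 1) {φ : X → X → X → ℝ}
    (hφ : Measurable fun p : X × X × X => φ p.1 p.2.1 p.2.2) {C : ℝ}
    (hC : ∀ x z z', |φ x z z'| ≤ C) (hcancel₁ : ∀ z z', ∫ x, φ x z z' * ρ x ∂ν = 0)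
    (hcancel₂ : ∀ x, ∫ z, ∫ z', φ x z z' * (ρ z * ρ z') ∂ν ∂ν = 0) {n N : ℕ} (hn : 2 ≤ n)
    (hnN : 2 * n ≤ N) :
    (n.factorial : ℝ)⁻¹ * ∫ Y : Fin N → X, ((1 / (N : ℝ) ^ 2) *
        ∑ i, ∑ j, ∑ k, φ (Y i) (Y j) (Y k)) ^ n * ∏ s, ρ (Y s) ∂Measure.pi (fun _ => ν) ≤
      n ^ 2 / 2 * (√(32 * Real.exp 1 ^ 3) *
        subexpNorm (ν.withDensity fun x => ENNReal.ofReal (ρ x)) (envelope φ)) ^ n := by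
  have hρint : Integrable ρ ν := .of_integral_ne_zero (by simp [hρ1])
  have := isProbabilityMeasure_withDensity_ofReal hρint hρ0 hρ1
  have bound := inv_factorial_mul_integral_pow_le_subexpNorm (ι := Fin N)
    (μ := ν.withDensity fun x => ENNReal.ofReal (ρ x)) hφ hC
    (fun z z' => by rw [integral_withDensity_ofReal hρ hρ0, hcancel₁])
    (fun x => by
      simp only [integral_withDensity_ofReal hρ hρ0, ← integral_mul_const]
      simpa only [mul_assoc, mul_comm, mul_left_comm] using hcancel₂ x)
    hn (by simpa using hnN)
  rwa [pi_withDensity_ofReal (fun _ => hρint) (fun _ => hρ0),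
    integral_withDensity_ofReal (by fun_prop) fun Y => Finset.prod_nonneg fun i _ => hρ0 (Y i),
    Fintype.card_fin] at bound

end LargeDeviation

lemma Msup_eq_subexpNorm {d : ℕ} {ρ : Torus d → ℝ} (hρ : Measurable ρ) (hρ0 : ∀ x, 0 ≤ ρ x)
    (φ : Torus d → Torus d → Torus d → ℝ) :
    Msup ρ φ =
      subexpNorm (volume.withDensity fun x => ENNReal.ofReal (ρ x)) (envelope φ) := by
  simp only [Msup, Mp, subexpNorm, integral_withDensity_ofReal hρ hρ0, envelope]

/-- Proposition 3.2 (small-`m` regime): if `4 ≤ 4m ≤ N` and `φ` satisfies both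
cancellations, then
`(1/(2m)!) ∫ ρ̄^{⊗N} (N^{−2} ∑_{i,j,k} φ(x_i,x_j,x_k))^{2m}
  ≤ 2 m² (√(32e³) sup_{p≥1} M_p/p)^{2m}`. -/
theorem stmt16 {d N m : ℕ} (hd : 0 < d) (hm : 1 ≤ m) (h4m : 4 * m ≤ N)
    (ρ : Torus d → ℝ) (hρmeas : Measurable ρ) (hρ0 : ∀ x, 0 ≤ ρ x)
    (hρ1 : ∫ x : Torus d, ρ x = 1)
    (φ : Torus d → Torus d → Torus d → ℝ)
    (hφmeas : Measurable fun p : Torus d × Torus d × Torus d => φ p.1 p.2.1 p.2.2)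
    (C : ℝ) (hφbdd : ∀ x z z', |φ x z z'| ≤ C)
    (hcancel1 : ∀ z z', ∫ x : Torus d, φ x z z' * ρ x = 0)
    (hcancel2 : ∀ x, ∫ z : Torus d, ∫ z' : Torus d, φ x z z' * (ρ z * ρ z') = 0) :
    ((Nat.factorial (2 * m) : ℝ))⁻¹ *
        ∫ X : Fin N → Torus d,
          ((1 / (N : ℝ) ^ 2) * ∑ i : Fin N, ∑ j : Fin N, ∑ k : Fin N,
              φ (X i) (X j) (X k)) ^ (2 * m) * ∏ s, ρ (X s)
      ≤ 2 * (m : ℝ) ^ 2 * (Real.sqrt (32 * Real.exp 1 ^ 3) * Msup ρ φ) ^ (2 * m) := by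
  rw [Msup_eq_subexpNorm hρmeas hρ0]
  exact (stmt16_general hρmeas hρ0 hρ1 hφmeas hφbdd hcancel1 hcancel2 (by omega)
    (by omega)).trans_eq (by push_cast; ring)
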